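/- arXiv:1708.08445 — 2 statements merged into one kernel-verified Lean document; each statement's English description precedes it below -/
import Mathlib

section
/- For all real numbers x, y, z > 0, the function F(x,y,z) = l(x/(1+y)) + l((1+x+y)z/((1+x)(1+y))) + l(xy/((1+x+y)(1+z))) + l(y/(1+x)) is invariant under every permutation of its three arguments: F(x,y,z) = F(y,x,z) = F(x,z,y) = F(z,y,x) = F(y,z,x) = F(z,x,y). -/
/-! Write `l(t) = (6/π²) g(t)` with `g(t) = L(t/(1+t))`. Differentiating the dilogarithm series gives
`2 dg = log(1+t) d(log t) - log t d(log(1+t))`. Exchanging the first two arguments of `F` merely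
permutes its summands, so everything reduces to `F(x,y,z) = F(x,z,y)`.

Fix `y, z` and set `N = 1+x+y+z+xy+xz+yz`. All four arguments `t` of `l` in `F`, as well as all
four `1+t`, are monomials in `x, y, z, 1+x, 1+y, 1+z, 1+x+y, N`. On inserting this in the formula
for `dg`, everything involving `1+x+y` cancels, and what is left of `∂F/∂x`
(`hasDerivAt_Ffun`) is symmetric in `y` and `z`. Hence `F(x,y,z) - F(x,z,y)` does not depend on
`x > 0`. As `g` is continuous on `[0,∞)` with `g(0) = 0`, the difference can be evaluated at `x = 0`,
where `F(0,y,z) = l(z) + l(y)`.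
-/

open Matrix BigOperators

noncomputable section

/-- The dilogarithm function `Li₂`. -/
def dilog (x : ℝ) : ℝ := ∑' k : ℕ, x ^ (k + 1) / ((k : ℝ) + 1) ^ 2

/-- The Rogers dilogarithm `L(x) = Li₂(x) + (1/2) log x log (1-x)`. -/
def rogersL (x : ℝ) : ℝ := dilog x + (1 / 2) * Real.log x * Real.log (1 - x)

/-- `l(x) = (6/π²) L(x/(1+x))`. -/
def ell (x : ℝ) : ℝ := 6 / Real.pi ^ 2 * rogersL (x / (1 + x))

/-- The minor of `M` on rows `I` and columns `J` (both taken in increasing order);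
by convention it is `0` if the cardinalities disagree, and `1` for `I = J = ∅`. -/
def gminor {n : ℕ} (M : Matrix (Fin n) (Fin n) ℝ) (I J : Finset (Fin n)) : ℝ :=
  if h : J.card = I.card then
    Matrix.det (Matrix.of fun i j : Fin I.card =>
      M (I.orderEmbOfFin rfl i) (J.orderEmbOfFin h j))
  else 0

/-- The 1-based interval `[a,b]` regarded as a finset of `Fin n`. -/
def iv (n a b : ℕ) : Finset (Fin n) :=
  Finset.univ.filter fun i => a ≤ (i : ℕ) + 1 ∧ (i : ℕ) + 1 ≤ b

/-- The last `k` columns (as a finset of `Fin n`). -/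
def lastCols (n k : ℕ) : Finset (Fin n) := Finset.univ.filter fun j => n - k ≤ (j : ℕ)

/-- The first `k` rows (as a finset of `Fin n`). -/
def firstRows (n k : ℕ) : Finset (Fin n) := Finset.univ.filter fun i => (i : ℕ) < k

/-- The right flag minor `Δ_I`: rows `I`, last `|I|` columns. -/
def flagR {n : ℕ} (M : Matrix (Fin n) (Fin n) ℝ) (I : Finset (Fin n)) : ℝ :=
  gminor M I (lastCols n I.card)

/-- The upper flag minor `Δ^J`: first `|J|` rows, columns `J`. -/
def flagU {n : ℕ} (M : Matrix (Fin n) (Fin n) ℝ) (J : Finset (Fin n)) : ℝ :=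
  gminor M (firstRows n J.card) J

/-- `Ī = {n+1-a : a ∈ I}` (in 1-based labelling; `Fin.rev` in 0-based labelling). -/
def barSet {n : ℕ} (I : Finset (Fin n)) : Finset (Fin n) := I.image Fin.rev

/-- `B_n`: invertible upper triangular real matrices. -/
def Bset (n : ℕ) : Set (Matrix (Fin n) (Fin n) ℝ) :=
  {M | M.BlockTriangular id ∧ IsUnit M.det}

/-- `N_n`: unipotent upper triangular real matrices. -/
def Nset (n : ℕ) : Set (Matrix (Fin n) (Fin n) ℝ) :=
  {M | M.BlockTriangular id ∧ ∀ i, M i i = 1}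

/-- `M` is totally positive with respect to a class `S` of matrices: `M ∈ S` and every minor
that does not vanish identically on `S` is positive. -/
def totPos {n : ℕ} (S : Set (Matrix (Fin n) (Fin n) ℝ)) (M : Matrix (Fin n) (Fin n) ℝ) : Prop :=
  M ∈ S ∧ ∀ I J : Finset (Fin n), I.card = J.card →
    (∃ A ∈ S, gminor A I J ≠ 0) → 0 < gminor M I J

/-- `B_n^+`: totally positive matrices in `B_n`. -/
def Bpos (n : ℕ) (M : Matrix (Fin n) (Fin n) ℝ) : Prop := totPos (Bset n) M

/-- `N_n^+`: totally positive matrices in `N_n`. -/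
def Npos (n : ℕ) (M : Matrix (Fin n) (Fin n) ℝ) : Prop := totPos (Nset n) M

/-- The permutation matrix `P` with `P_{ij} = δ_{i+j,n+1}` (1-based). -/
def Pmat (n : ℕ) : Matrix (Fin n) (Fin n) ℝ :=
  Matrix.of fun i j => if (i : ℕ) + (j : ℕ) + 2 = n + 1 then 1 else 0

/-- `Decomp n M M₁ M₂ D` asserts `P M P = M₁ P D M₂` with `M₁, M₂ ∈ N_n^+` and `D` diagonal;
i.e. `M₁ = M′`, `M₂ = M″`, `D = D_M`. -/
def Decomp (n : ℕ) (M M₁ M₂ D : Matrix (Fin n) (Fin n) ℝ) : Prop :=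
  Npos n M₁ ∧ Npos n M₂ ∧ D.IsDiag ∧
    Pmat n * M * Pmat n = M₁ * Pmat n * D * M₂

/-- `J_k(x) = exp(x e_k) = 1 + x e_k` where `(e_k)_{ij} = δ_{ik} δ_{j,k+1}` (1-based). -/
def Jmat (n : ℕ) (k : ℕ) (x : ℝ) : Matrix (Fin n) (Fin n) ℝ :=
  1 + Matrix.of fun (i j : Fin n) => if (i : ℕ) + 1 = k ∧ (j : ℕ) = k then x else 0

/-- The matrix `𝕁_1 ⋯ 𝕁_{n-1}` with `𝕁_k = J_k(x_{1,k+1}) ⋯ J_1(x_{k,k+1})`,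
for a (1-based) coordinate function `x`. -/
def jacobiMat (n : ℕ) (x : ℕ → ℕ → ℝ) : Matrix (Fin n) (Fin n) ℝ :=
  (((List.range (n - 1)).map fun p =>
      (((List.range (p + 1)).map fun m => Jmat n (p + 1 - m) (x (m + 1) (p + 2))).prod)).prod)

/-- `x` is the collection of Jacobi coordinates of `M`: all `x i j` (for `1 ≤ i < j ≤ n`) are
positive and `M = 𝕁_1 ⋯ 𝕁_{n-1}`. -/
def IsJacobi (n : ℕ) (M : Matrix (Fin n) (Fin n) ℝ) (x : ℕ → ℕ → ℝ) : Prop :=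
  (∀ i j, 1 ≤ i → i < j → j ≤ n → 0 < x i j) ∧ M = jacobiMat n x

/-- The Y-variable `Y_{abc}(M)`. -/
def Yr (n : ℕ) (M : Matrix (Fin n) (Fin n) ℝ) (a b c : ℕ) : ℝ :=
  flagR M (iv n a (b-1) ∪ iv n (c+1) n) * flagR M (iv n (a+1) b ∪ iv n c n) /
    (flagR M (iv n a b ∪ iv n (c+1) n) * flagR M (iv n (a+1) (b-1) ∪ iv n c n))

/-- The Y-variable `Ỹ_{abc}(M)`. -/
def Ytr (n : ℕ) (M : Matrix (Fin n) (Fin n) ℝ) (a b c : ℕ) : ℝ :=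
  flagR M (iv n 1 a ∪ iv n (b+1) (c-1)) * flagR M (iv n 1 (a-1) ∪ iv n b c) /
    (flagR M (iv n 1 a ∪ iv n b (c-1)) * flagR M (iv n 1 (a-1) ∪ iv n (b+1) c))

/-- The Y-variable `Y^{abc}(M)`. -/
def Yu (n : ℕ) (M : Matrix (Fin n) (Fin n) ℝ) (a b c : ℕ) : ℝ :=
  flagU M (iv n a b ∪ iv n (c+1) n) * flagU M (iv n (a+1) (b-1) ∪ iv n c n) /
    (flagU M (iv n a (b-1) ∪ iv n (c+1) n) * flagU M (iv n (a+1) b ∪ iv n c n))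

/-- The Y-variable `Ỹ^{abc}(M)`. -/
def Ytu (n : ℕ) (M : Matrix (Fin n) (Fin n) ℝ) (a b c : ℕ) : ℝ :=
  flagU M (iv n 1 a ∪ iv n b (c-1)) * flagU M (iv n 1 (a-1) ∪ iv n (b+1) c) /
    (flagU M (iv n 1 a ∪ iv n (b+1) (c-1)) * flagU M (iv n 1 (a-1) ∪ iv n b c))

/-- The discrete tetrahedron `T_n = {(a,b,c) : 1 ≤ a < b < c ≤ n}`. -/
def Tset (n : ℕ) : Finset (ℕ × ℕ × ℕ) :=
  ((Finset.range (n+1)) ×ˢ (Finset.range (n+1)) ×ˢ (Finset.range (n+1))).filter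
    fun t => 1 ≤ t.1 ∧ t.1 < t.2.1 ∧ t.2.1 < t.2.2 ∧ t.2.2 ≤ n


/-- The function `F(x,y,z)` of (2.4). -/
def Ffun (x y z : ℝ) : ℝ :=
  ell (x / (1 + y)) + ell ((1 + x + y) * z / ((1 + x) * (1 + y))) +
    ell (x * y / ((1 + x + y) * (1 + z))) + ell (y / (1 + x))

lemma hasDerivAt_dilog_tsum {x : ℝ} (hx : |x| < 1) :
    HasDerivAt dilog (∑' k : ℕ, x ^ k / ((k : ℝ) + 1)) x := by
  obtain ⟨r, hxr, hr1⟩ := exists_between hx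
  have hr0 : 0 < r := (abs_nonneg x).trans_lt hxr
  have key := hasDerivAt_tsum_of_isPreconnected
    (g := fun (k : ℕ) (y : ℝ) => y ^ (k + 1) / ((k : ℝ) + 1) ^ 2)
    (g' := fun (k : ℕ) (y : ℝ) => y ^ k / ((k : ℝ) + 1))
    (u := fun k : ℕ => r ^ k) (t := Metric.ball (0 : ℝ) r) (y₀ := 0) (y := x)
    (summable_geometric_of_lt_one hr0.le hr1) Metric.isOpen_ball
    (convex_ball (0 : ℝ) r).isPreconnected ?_ ?_ (Metric.mem_ball_self hr0) ?_ ?_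
  · exact key
  · intro k y _
    have h := (hasDerivAt_pow (k + 1) y).div_const (((k : ℝ) + 1) ^ 2)
    refine h.congr_deriv ?_
    have : (k : ℝ) + 1 ≠ 0 := by positivity
    push_cast
    field_simp
  · intro k y hy
    have hy' : |y| < r := by simpa using hy
    have h1 : (1 : ℝ) ≤ (k : ℝ) + 1 := by linarith [(Nat.cast_nonneg k : (0 : ℝ) ≤ k)]
    rw [Real.norm_eq_abs, abs_div, abs_pow, abs_of_pos (by linarith : (0 : ℝ) < (k : ℝ) + 1)]
    calc |y| ^ k / ((k : ℝ) + 1) ≤ |y| ^ k := div_le_self (by positivity) h1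
      _ ≤ r ^ k := by gcongr
  · simp [summable_zero]
  · simpa using hxr

lemma hasDerivAt_dilog {x : ℝ} (h0 : 0 < x) (h1 : x < 1) :
    HasDerivAt dilog (-Real.log (1 - x) / x) x := by
  have hx : |x| < 1 := by rwa [abs_of_pos h0]
  refine (hasDerivAt_dilog_tsum hx).congr_deriv ?_
  rw [← (Real.hasSum_pow_div_log_of_abs_lt_one hx).tsum_eq, ← tsum_div_const]
  refine tsum_congr fun k => ?_
  rw [pow_succ]
  field_simp

lemma hasDerivAt_rogersL {x : ℝ} (h0 : 0 < x) (h1 : x < 1) :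
    HasDerivAt rogersL (-Real.log (1 - x) / (2 * x) - Real.log x / (2 * (1 - x))) x := by
  have h1' : 1 - x ≠ 0 := by linarith
  have hl := Real.hasDerivAt_log h0.ne'
  have hl1 := ((hasDerivAt_id x).const_sub 1).log h1'
  refine ((hasDerivAt_dilog h0 h1).add ((hl.const_mul (1 / 2)).mul hl1)).congr_deriv ?_
  simp only [id]
  field_simp
  ring

/-- With the convention `log 0 = 0`, `rogersL 0 = 0` is the limiting value, since
`log (1 - x) = O(x)` and `x log x → 0`. -/
lemma continuousAt_rogersL_zero : ContinuousAt rogersL 0 := by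
  refine (hasDerivAt_dilog_tsum (by simp)).continuousAt.add ?_
  have hd := ((hasDerivAt_id (0 : ℝ)).const_sub 1).log (by simp)
  have hO : (fun x : ℝ => Real.log (1 - x)) =O[nhds 0] fun x : ℝ => x := by
    simpa using hd.isBigO_sub
  have hO' : (fun x : ℝ => Real.log x * Real.log (1 - x)) =O[nhds 0]
      fun x : ℝ => Real.log x * x := (Asymptotics.isBigO_refl _ _).mul hO
  have ht : Filter.Tendsto (fun x : ℝ => Real.log x * x) (nhds 0) (nhds 0) := by
    have := Real.continuous_mul_log.tendsto 0
    simpa [mul_comm] using this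
  have h := (hO'.trans_tendsto ht).const_mul (1 / 2)
  simpa [ContinuousAt, mul_assoc] using h

lemma continuousAt_ell {t : ℝ} (ht : 0 ≤ t) : ContinuousAt ell t := by
  have hs : ContinuousAt (fun t : ℝ => t / (1 + t)) t :=
    continuousAt_id.div (continuousAt_const.add continuousAt_id) (by positivity)
  have hL : ContinuousAt rogersL (t / (1 + t)) := by
    rcases ht.eq_or_lt with rfl | h
    · simpa using continuousAt_rogersL_zero
    · exact (hasDerivAt_rogersL (by positivity)
        (by rw [div_lt_one (by positivity)]; linarith)).continuousAt
  exact continuousAt_const.mul (ContinuousAt.comp (f := fun t : ℝ => t / (1 + t)) hL hs)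

/-- The chain rule for `ell` in terms of the logarithmic derivatives `p` of `u` and
`q` of `1 + u`. -/
lemma hasDerivAt_ell_comp {u : ℝ → ℝ} {x p q u' : ℝ} (hu : 0 < u x) (hd : HasDerivAt u u' x)
    (hp : u' = u x * p) (hq : u' = (1 + u x) * q) :
    HasDerivAt (fun s => ell (u s))
      (3 / Real.pi ^ 2 * (Real.log (1 + u x) * p - Real.log (u x) * q)) x := by
  have h1 : 0 < 1 + u x := by positivity
  have hs := hd.div (hd.const_add 1) h1.ne'
  have hL := hasDerivAt_rogersL (x := u x / (1 + u x)) (by positivity)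
    (by rw [div_lt_one h1]; linarith)
  refine ((HasDerivAt.comp x hL hs).const_mul (6 / Real.pi ^ 2)).congr_deriv ?_
  have hp' : p = u' / u x := by rw [hp]; field_simp
  have hq' : q = u' / (1 + u x) := by rw [hq]; field_simp
  have e : 1 - u x / (1 + u x) = (1 + u x)⁻¹ := by field_simp; ring
  rw [e, Real.log_inv, Real.log_div hu.ne' h1.ne', hp', hq']
  field_simp
  ring

/-- The partial derivative of `F` in its first argument, written so as to be visibly symmetric
in the other two. -/
lemma hasDerivAt_Ffun {x y z : ℝ} (hx : 0 < x) (hy : 0 < y) (hz : 0 < z) :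
    HasDerivAt (fun s => Ffun s y z)
      (3 / Real.pi ^ 2 *
        (1 / x * (Real.log (1 + x + y + z + x * y + x * z + y * z)
            - (Real.log (1 + y) + Real.log (1 + z)))
          + 1 / (1 + x) * (Real.log y + Real.log z
            - Real.log (1 + x + y + z + x * y + x * z + y * z))
          + (1 + y + z) / (1 + x + y + z + x * y + x * z + y * z) *
            (Real.log (1 + x) + (Real.log (1 + y) + Real.log (1 + z))
              - Real.log x - (Real.log y + Real.log z)))) x := by
  set N := 1 + x + y + z + x * y + x * z + y * z with hN
  have hNp : 0 < N := by positivity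
  have hx1 : 0 < 1 + x := by positivity
  have hy1 : 0 < 1 + y := by positivity
  have hz1 : 0 < 1 + z := by positivity
  have hS : 0 < 1 + x + y := by positivity
  have i := hasDerivAt_id x
  have iS : HasDerivAt (fun s : ℝ => 1 + s + y) 1 x := (i.const_add 1).add_const y
  have d1 : HasDerivAt (fun s : ℝ => s / (1 + y)) (1 / (1 + y)) x := i.div_const (1 + y)
  have d2 := (iS.mul_const z).div ((i.const_add 1).mul_const (1 + y)) (by positivity)
  have d3 := (i.mul_const y).div (iS.mul_const (1 + z)) (by positivity)
  have d4 := (hasDerivAt_const x y).div (i.const_add 1) (by positivity)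
  have e1 : 1 + x / (1 + y) = (1 + x + y) / (1 + y) := by field_simp; ring
  have e2 : 1 + (1 + x + y) * z / ((1 + x) * (1 + y)) = N / ((1 + x) * (1 + y)) := by
    rw [hN]; field_simp; ring
  have e3 : 1 + x * y / ((1 + x + y) * (1 + z)) = N / ((1 + x + y) * (1 + z)) := by
    rw [hN]; field_simp; ring
  have e4 : 1 + y / (1 + x) = (1 + x + y) / (1 + x) := by field_simp
  have D1 := hasDerivAt_ell_comp (p := 1 / x) (q := 1 / (1 + x + y)) (by positivity) d1
    (by field_simp) (by rw [e1]; field_simp)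
  have D2 := hasDerivAt_ell_comp (p := 1 / (1 + x + y) - 1 / (1 + x))
    (q := (1 + y + z) / N - 1 / (1 + x)) (by simp only [Pi.div_apply, id]; positivity) d2
    (by simp only [Pi.div_apply, id]; field_simp)
    (by simp only [Pi.div_apply, id]; rw [e2]; field_simp; rw [hN]; ring)
  have D3 := hasDerivAt_ell_comp (p := 1 / x - 1 / (1 + x + y))
    (q := (1 + y + z) / N - 1 / (1 + x + y)) (by simp only [Pi.div_apply, id]; positivity) d3
    (by simp only [Pi.div_apply, id]; field_simp)
    (by simp only [Pi.div_apply, id]; rw [e3]; field_simp; rw [hN]; ring)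
  have D4 := hasDerivAt_ell_comp (p := -(1 / (1 + x)))
    (q := 1 / (1 + x + y) - 1 / (1 + x)) (by simp only [Pi.div_apply, id]; positivity) d4
    (by simp only [Pi.div_apply, id]; field_simp; ring)
    (by simp only [Pi.div_apply, id]; rw [e4]; field_simp; ring)
  refine (((D1.add D2).add D3).add D4).congr_deriv ?_
  simp only [Pi.div_apply, id]
  rw [e1, e2, e3, e4]
  rw [Real.log_div hS.ne' hy1.ne', Real.log_div hx.ne' hy1.ne',
    Real.log_div hNp.ne' (by positivity), Real.log_div (by positivity) (by positivity),
    Real.log_div hNp.ne' (by positivity), Real.log_div (by positivity) (by positivity),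
    Real.log_div hS.ne' hx1.ne', Real.log_div hy.ne' hx1.ne',
    Real.log_mul hS.ne' hz.ne', Real.log_mul hx1.ne' hy1.ne', Real.log_mul hx.ne' hy.ne',
    Real.log_mul hS.ne' hz1.ne']
  ring

lemma continuousOn_Ffun {y z : ℝ} (hy : 0 < y) (hz : 0 < z) :
    ContinuousOn (fun s => Ffun s y z) (Set.Ici 0) := by
  intro s hs
  have hs0 : 0 ≤ s := hs
  refine ContinuousAt.continuousWithinAt ?_
  have c {u : ℝ → ℝ} (hu : 0 ≤ u s) (h : ContinuousAt u s) :
      ContinuousAt (fun s => ell (u s)) s :=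
    ContinuousAt.comp (f := u) (continuousAt_ell hu) h
  refine (((c ?_ ?_).add (c ?_ ?_)).add (c ?_ ?_)).add (c ?_ ?_)
  all_goals first
    | positivity
    | exact ContinuousAt.div (by fun_prop) (by fun_prop) (by positivity)

lemma Ffun_zero {y z : ℝ} (hy : 0 < y) : Ffun 0 y z = ell 0 + ell z + ell 0 + ell y := by
  have hy1 : 1 + y ≠ 0 := by positivity
  simp [Ffun, mul_div_cancel_left₀ z hy1]

lemma Ffun_swap_right {x y z : ℝ} (hx : 0 < x) (hy : 0 < y) (hz : 0 < z) :
    Ffun x y z = Ffun x z y := by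
  have hc : ContinuousOn (fun s => Ffun s y z - Ffun s z y) (Set.Icc 0 x) :=
    ((continuousOn_Ffun hy hz).sub (continuousOn_Ffun hz hy)).mono Set.Icc_subset_Ici_self
  have hd : ∀ s ∈ Set.Ioo 0 x, HasDerivAt (fun s => Ffun s y z - Ffun s z y) 0 s := by
    intro s hs
    refine ((hasDerivAt_Ffun hs.1 hy hz).sub (hasDerivAt_Ffun hs.1 hz hy)).congr_deriv ?_
    rw [show 1 + s + z + y + s * z + s * y + z * y = 1 + s + y + z + s * y + s * z + y * z by ring]
    ring
  obtain ⟨c, -, h⟩ := exists_hasDerivAt_eq_slope _ (fun _ => 0) hx hc hd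
  rw [Ffun_zero hy, Ffun_zero hz, eq_div_iff (by linarith)] at h
  linarith

lemma Ffun_swap_left (x y z : ℝ) : Ffun x y z = Ffun y x z := by
  unfold Ffun
  rw [show 1 + y + x = 1 + x + y by ring, mul_comm (1 + y) (1 + x), mul_comm y x]
  ring

/-- `F(x,y,z)` is invariant under every permutation of its arguments. -/
theorem stmt_0 (x y z : ℝ) (hx : 0 < x) (hy : 0 < y) (hz : 0 < z) :
    Ffun x y z = Ffun y x z ∧ Ffun x y z = Ffun x z y ∧ Ffun x y z = Ffun z y x ∧
      Ffun x y z = Ffun y z x ∧ Ffun x y z = Ffun z x y := by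
  have h1 : Ffun x y z = Ffun y z x := by rw [Ffun_swap_left, Ffun_swap_right hy hx hz]
  have h2 : Ffun x y z = Ffun z x y := by rw [Ffun_swap_right hx hy hz, Ffun_swap_left]
  exact ⟨Ffun_swap_left x y z, Ffun_swap_right hx hy hz, h1.trans (Ffun_swap_left y z x), h1, h2⟩

end
end

section
/- For every G ∈ B_n^+, there exists a unique matrix Ǧ ∈ B_n^+ such that Δ_I(Ǧ) = Δ_{Ī}(G) for all subsets I ⊆ {1,…,n}, and a unique matrix Ĝ ∈ B_n^+ such that Δ^J(Ĝ) = Δ^{J̄}(G) for all subsets J ⊆ {1,…,n}. -/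
/-!
Both halves are proved through right flag minors; the upper flag minors reduce to them because
transposition in the antidiagonal preserves `B_n^+` and exchanges the two families up to the bar
(`flagU_eq_flagR_antiT`).

*Uniqueness.* For `B` upper triangular and `i ≤ j`, the flag minor on the rows `i, j + 1, …, n`
equals `B i j` times the flag minor on the rows `j + 1, …, n`, so the positive flag minors of `B`
determine it (`FlagPos.ext`).

*Existence.* Let `K` be `G` with its rows reversed. The trailing principal minors of `K` are, up
to sign, flag minors of `G`, hence nonzero; so there is a lower triangular `T` with prescribed
nonzero diagonal making `K * T` upper triangular. Right multiplication by `T` multiplies each flag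
minor with `k` columns by the product of the last `k` diagonal entries of `T`, and the alternating
diagonal of signs ending in `1` cancels exactly the sign of the reversal of `k` rows
(`exists_reversed`).

*Total positivity.* It remains to see that an upper triangular `B` with positive flag minors is
totally positive (`FlagPos.bpos`). The minors not vanishing identically on `B_n` are those whose
increasing enumerations of rows and columns satisfy `f ≤ g` (`Bpos_iff`). When the columns are
consecutive, such a minor times a product of positive diagonal entries is a flag minor. The general
case follows by an upper triangular version of Fekete's criterion (`fekete`), which rests on a
three-term relation between minors (`three_term`).
-/

open Matrix BigOperators

noncomputable section

/-! ### Minors as functions of increasing enumerations -/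

/-- The minor of `M` indexed by enumerations `f` of its rows and `g` of its columns. -/
abbrev fminor {n k : ℕ} (M : Matrix (Fin n) (Fin n) ℝ) (f g : Fin k → Fin n) : ℝ :=
  (M.submatrix f g).det

/-- The increasing enumeration of the last `k` elements of `Fin n`. -/
def lastEnum {n k : ℕ} (hk : k ≤ n) (r : Fin k) : Fin n := ⟨n - k + r, by omega⟩

theorem lastEnum_strictMono {n k : ℕ} (hk : k ≤ n) : StrictMono (lastEnum hk) := by
  intro a b h
  simp only [lastEnum, Fin.lt_def] at *
  omega

theorem le_of_strictMono {n k : ℕ} {f : Fin k → Fin n} (hf : StrictMono f) : k ≤ n := by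
  simpa using Fintype.card_le_of_injective f hf.injective

theorem strictMono_add_le {n k : ℕ} {f : Fin k → Fin n} (hf : StrictMono f) (r : Fin k) :
    ∀ d (h : (r : ℕ) + d < k), (f r : ℕ) + d ≤ f ⟨r + d, h⟩
  | 0, h => le_rfl
  | d + 1, h => by
    have h1 := strictMono_add_le hf r d (by omega)
    have h2 : f ⟨r + d, by omega⟩ < f ⟨r + (d + 1), h⟩ := hf (by simp [Fin.lt_def])
    rw [Fin.lt_def] at h2
    omega

theorem le_lastEnum {n k : ℕ} {f : Fin k → Fin n} (hf : StrictMono f) (r : Fin k) :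
    f r ≤ lastEnum (le_of_strictMono hf) r := by
  have h1 := strictMono_add_le hf r (k - 1 - r) (by omega)
  have := (f ⟨r + (k - 1 - r), by omega⟩).2
  rw [Fin.le_def]
  simp only [lastEnum]
  omega

/-- `gminor` computed through any increasing enumerations of the two index sets, avoiding the
cardinality cast in its definition. -/
theorem gminor_eq_fminor {n k : ℕ} (M : Matrix (Fin n) (Fin n) ℝ) {I J : Finset (Fin n)}
    {f g : Fin k → Fin n} (hf : StrictMono f) (hg : StrictMono g)
    (hI : I = Finset.univ.image f) (hJ : J = Finset.univ.image g) :
    gminor M I J = fminor M f g := by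
  have cI : I.card = k := by rw [hI, Finset.card_image_of_injective _ hf.injective]; simp
  have cJ : J.card = k := by rw [hJ, Finset.card_image_of_injective _ hg.injective]; simp
  have eI := Finset.orderEmbOfFin_unique cI (f := f) (fun x => by simp [hI]) hf
  have eJ := Finset.orderEmbOfFin_unique cJ (f := g) (fun x => by simp [hJ]) hg
  rw [eI, eJ]
  clear eI eJ hI hJ hf hg
  subst cI
  rw [gminor, dif_pos cJ]
  rfl

theorem exists_enum {n : ℕ} (I : Finset (Fin n)) {k : ℕ} (h : I.card = k) :
    ∃ f : Fin k → Fin n, StrictMono f ∧ I = Finset.univ.image f :=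
  ⟨I.orderEmbOfFin h, (I.orderEmbOfFin h).strictMono, by simp⟩

theorem lastCols_eq {n k : ℕ} (hk : k ≤ n) : lastCols n k = Finset.univ.image (lastEnum hk) := by
  ext x
  simp only [lastCols, Finset.mem_filter, Finset.mem_univ, true_and, Finset.mem_image]
  constructor
  · intro h
    exact ⟨⟨x - (n - k), by omega⟩, by ext; simp only [lastEnum]; omega⟩
  · rintro ⟨r, rfl⟩
    simp [lastEnum]

theorem flagR_eq {n k : ℕ} (M : Matrix (Fin n) (Fin n) ℝ) {f : Fin k → Fin n}
    (hf : StrictMono f) :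
    flagR M (Finset.univ.image f) = fminor M f (lastEnum (le_of_strictMono hf)) := by
  have c : (Finset.univ.image f).card = k := by
    rw [Finset.card_image_of_injective _ hf.injective]; simp
  refine gminor_eq_fminor M hf (lastEnum_strictMono _) rfl ?_
  rw [c, lastCols_eq (le_of_strictMono hf)]

/-- The increasing enumeration of the bar of the set enumerated by `f`. -/
def barEnum {n k : ℕ} (f : Fin k → Fin n) (r : Fin k) : Fin n := (f r.rev).rev

theorem barEnum_strictMono {n k : ℕ} {f : Fin k → Fin n} (hf : StrictMono f) :
    StrictMono (barEnum f) := fun _ _ h => Fin.rev_lt_rev.2 (hf (Fin.rev_lt_rev.2 h))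

theorem barSet_image {n k : ℕ} (f : Fin k → Fin n) :
    barSet (Finset.univ.image f) = Finset.univ.image (barEnum f) := by
  ext x
  simp only [barSet, Finset.mem_image, Finset.mem_univ, true_and, exists_exists_eq_and, barEnum]
  constructor
  · rintro ⟨r, rfl⟩
    exact ⟨r.rev, by simp⟩
  · rintro ⟨r, rfl⟩
    exact ⟨r.rev, rfl⟩

theorem barSet_barSet {n : ℕ} (I : Finset (Fin n)) : barSet (barSet I) = I := by
  simp [barSet, Finset.image_image, Function.comp_def]

/-! ### Nontrivial minors on upper triangular matrices -/

/-- If `f r > g r`, the zero block in rows `≥ r` and columns `≤ r` meets every term of the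
determinant. -/
theorem fminor_eq_zero {n k : ℕ} {M : Matrix (Fin n) (Fin n) ℝ} (hM : M.BlockTriangular id)
    {f g : Fin k → Fin n} (hf : StrictMono f) (hg : StrictMono g) (h : ¬ ∀ r, f r ≤ g r) :
    fminor M f g = 0 := by
  push Not at h
  obtain ⟨r, hr⟩ := h
  rw [fminor, Matrix.det_apply]
  refine Finset.sum_eq_zero fun σ _ => ?_
  -- `σ` cannot map the `r + 1` indices `s ≤ r` into the `r` indices below `r`.
  obtain ⟨s, hs, hσ⟩ : ∃ s ≤ r, r ≤ σ s := by
    by_contra! hc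
    have := Finset.card_le_card_of_injOn (s := Finset.Iic r) (t := Finset.Iio r) σ
      (fun s hs => by simpa using hc s (by simpa using hs)) σ.injective.injOn
    simp at this
  rw [Finset.prod_eq_zero (Finset.mem_univ s), smul_zero]
  exact hM (lt_of_le_of_lt (hg.monotone hs) (lt_of_lt_of_le hr (hf.monotone hσ)))

/-- Every minor with `f ≤ g` is nonzero at some matrix of `B_n`: at the unipotent matrix with ones
at the positions `(f r, g r)`. -/
theorem exists_fminor_ne_zero {n k : ℕ} {f g : Fin k → Fin n} (hf : StrictMono f)
    (hg : StrictMono g) (h : ∀ r, f r ≤ g r) : ∃ A ∈ Bset n, fminor A f g ≠ 0 := by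
  classical
  let A : Matrix (Fin n) (Fin n) ℝ :=
    Matrix.of fun i j => if i = j ∨ ∃ r, f r = i ∧ g r = j then 1 else 0
  have hA : A.BlockTriangular id := by
    intro i j hij
    simp only [A, Matrix.of_apply]
    rw [if_neg]
    rintro (rfl | ⟨r, rfl, rfl⟩)
    · exact lt_irrefl _ hij
    · exact absurd (h r) (not_le.2 hij)
  refine ⟨A, ⟨hA, ?_⟩, ?_⟩
  · rw [Matrix.det_of_isUpperTriangular hA]
    simp [A]
  · rw [fminor, Matrix.det_of_isLowerTriangular]
    · rw [Finset.prod_eq_one]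
      · exact one_ne_zero
      · exact fun r _ => if_pos (Or.inr ⟨r, rfl, rfl⟩)
    · intro r s hrs
      have hrs : r < s := hrs
      simp only [A, Matrix.of_apply, Matrix.submatrix_apply]
      rw [if_neg]
      rintro (e | ⟨t, ht, ht'⟩)
      · exact absurd e ((h r).trans_lt (hg hrs)).ne
      · exact hrs.ne ((hf.injective ht).symm.trans (hg.injective ht'))

/-- The nontrivial minors on `B_n` are those with `f ≤ g`. -/
theorem Bpos_iff {n : ℕ} (M : Matrix (Fin n) (Fin n) ℝ) :
    Bpos n M ↔ M ∈ Bset n ∧ ∀ (k : ℕ) (f g : Fin k → Fin n), StrictMono f → StrictMono g →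
      (∀ r, f r ≤ g r) → 0 < fminor M f g := by
  constructor
  · rintro ⟨hM, h⟩
    refine ⟨hM, fun k f g hf hg hfg => ?_⟩
    rw [← gminor_eq_fminor M hf hg rfl rfl]
    refine h _ _ ?_ ?_
    · rw [Finset.card_image_of_injective _ hf.injective,
        Finset.card_image_of_injective _ hg.injective]
    · obtain ⟨A, hA, h0⟩ := exists_fminor_ne_zero hf hg hfg
      exact ⟨A, hA, by rwa [gminor_eq_fminor A hf hg rfl rfl]⟩
  · rintro ⟨hM, h⟩
    refine ⟨hM, fun I J hIJ => ?_⟩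
    rintro ⟨A, hA, h0⟩
    obtain ⟨f, hf, hI⟩ := exists_enum I rfl
    obtain ⟨g, hg, hJ⟩ := exists_enum J hIJ.symm
    rw [gminor_eq_fminor _ hf hg hI hJ] at h0 ⊢
    refine h _ f g hf hg ?_
    by_contra hc
    exact h0 (fminor_eq_zero hA.1 hf hg hc)

/-! ### The three-term relation and Fekete's criterion -/

/-- The alternating vector of maximal minors of a `k × (k + 1)` matrix lies in its kernel: expand
the determinant of the matrix with row `r` repeated on top. -/
theorem sum_alternating_minors {k : ℕ} (M : Matrix (Fin k) (Fin (k + 1)) ℝ) (r : Fin k) :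
    ∑ c : Fin (k + 1), (-1) ^ (c : ℕ) * M r c * (M.submatrix id c.succAbove).det = 0 := by
  let N : Matrix (Fin (k + 1)) (Fin (k + 1)) ℝ := Matrix.of (Fin.cons (M r) M)
  have h0 : N.det = 0 := Matrix.det_zero_of_row_eq (Fin.succ_ne_zero r).symm (show N 0 = N r.succ from rfl)
  rw [Matrix.det_succ_row_zero] at h0
  exact h0

/-- The three-term relation between minors of a `(m + 2) × (m + 3)` matrix: the columns `0`,
`q = i + 1` and `last` play the distinguished roles, and the smaller minors leave out the last row.
Writing `D c` for the maximal minor without the column `c` and `E c d` for the minor without the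
last row and the columns `c, d`, it reads `E 0 last * D q = E q last * D 0 + E 0 q * D last`. -/
theorem three_term {m : ℕ} (M : Matrix (Fin (m + 2)) (Fin (m + 3)) ℝ) (i : Fin (m + 1)) :
    (M.submatrix Fin.castSucc fun t : Fin (m + 1) => t.castSucc.succ).det *
        (M.submatrix id i.castSucc.succ.succAbove).det =
      (M.submatrix Fin.castSucc (i.castSucc.succ.succAbove ∘ Fin.castSucc)).det *
        (M.submatrix id Fin.succ).det +
      (M.submatrix Fin.castSucc (i.castSucc.succ.succAbove ∘ Fin.succ)).det *
        (M.submatrix id Fin.castSucc).det := by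
  have ec : i.castSucc.succ.succAbove ∘ Fin.castSucc =
      (Fin.cons 0 fun t : Fin m => (i.succAbove t).castSucc.succ) := by
    ext t
    refine Fin.cases ?_ (fun t => ?_) t
    · simp [Fin.succAbove, Fin.lt_def]
    · simp only [Function.comp_apply, Fin.cons_succ, ← Fin.succ_castSucc,
        Fin.succ_succAbove_succ, Fin.castSucc_succAbove_castSucc]
  have es : i.castSucc.succ.succAbove ∘ Fin.succ =
      (Fin.snoc (fun t : Fin m => (i.succAbove t).castSucc.succ) (Fin.last _) :
        Fin (m + 1) → Fin (m + 3)) := by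
    ext t
    refine Fin.lastCases ?_ (fun t => ?_) t
    · simp only [Function.comp_apply, Fin.snoc_last, Fin.succAbove, Fin.lt_def]
      split_ifs with h
      · simp only [Fin.val_castSucc, Fin.val_succ, Fin.val_last] at h
        omega
      · simp
    · simp only [Function.comp_apply, Fin.snoc_castSucc,
        Fin.succ_succAbove_succ, Fin.castSucc_succAbove_castSucc]
  rw [ec, es]
  set A := M.submatrix Fin.castSucc fun t : Fin (m + 1) => t.castSucc.succ with hA
  set D : Fin (m + 3) → ℝ := fun c => (M.submatrix id c.succAbove).det with hD
  have hD0 : (M.submatrix id Fin.succ).det = D 0 := by simp [hD, Fin.succAbove_zero]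
  have hDl : (M.submatrix id Fin.castSucc).det = D (Fin.last _) := by
    simp [hD, Fin.succAbove_last]
  rw [hD0, hDl]
  -- The kernel relation, restricted to the first rows and solved for the middle columns.
  have hker : A *ᵥ (fun t => (-1) ^ (t.val + 1) * D t.castSucc.succ) =
      (-D 0) • (fun r => M r.castSucc 0) +
        (-((-1) ^ (m + 2) * D (Fin.last _))) • (fun r => M r.castSucc (Fin.last _)) := by
    ext r
    have h := sum_alternating_minors M r.castSucc
    rw [Fin.sum_univ_succ, Fin.sum_univ_castSucc] at h
    simp only [Matrix.mulVec, dotProduct, Pi.add_apply, Pi.smul_apply, smul_eq_mul, hA,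
      Matrix.submatrix_apply]
    have e : ∑ t : Fin (m + 1), M r.castSucc t.castSucc.succ *
        ((-1) ^ (t.val + 1) * D t.castSucc.succ) =
        ∑ t : Fin (m + 1), (-1) ^ (t.castSucc.succ : ℕ) * M r.castSucc t.castSucc.succ *
          (M.submatrix id t.castSucc.succ.succAbove).det := by
      refine Finset.sum_congr rfl fun t _ => ?_
      simp only [hD, Fin.val_succ, Fin.val_castSucc]
      ring
    rw [e]
    simp only [Fin.succ_last, Fin.val_zero, Fin.val_last, pow_zero] at h
    replace h : 1 * M r.castSucc 0 * (M.submatrix id (Fin.succAbove 0)).det +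
        ((∑ t : Fin (m + 1), (-1) ^ (t.castSucc.succ : ℕ) * M r.castSucc t.castSucc.succ *
          (M.submatrix id t.castSucc.succ.succAbove).det) +
        (-1) ^ (m + 2) * M r.castSucc (Fin.last (m + 2)) *
          (M.submatrix id (Fin.last (m + 2)).succAbove).det) = 0 := h
    simp only [hD]
    linear_combination h
  have hcr := congrArg (fun b => Matrix.cramer A b i) hker
  -- Both evaluations of Cramer's vector are compared through Laplace expansions.
  have hleft : Matrix.cramer A (A *ᵥ (fun t => (-1) ^ (t.val + 1) * D t.castSucc.succ)) i =
      A.det * ((-1) ^ (i.val + 1) * D i.castSucc.succ) := by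
    rw [Matrix.cramer_eq_adjugate_mulVec, Matrix.mulVec_mulVec, Matrix.adjugate_mul,
      Matrix.smul_mulVec, Matrix.one_mulVec]
    rfl
  have hlap : ∀ b : Fin (m + 1) → ℝ, Matrix.cramer A b i =
      ∑ r : Fin (m + 1), (-1) ^ (r + i : ℕ) * b r *
        (A.submatrix r.succAbove i.succAbove).det := by
    intro b
    rw [Matrix.cramer_apply, Matrix.det_succ_column _ i]
    refine Finset.sum_congr rfl fun r _ => ?_
    rw [Matrix.submatrix_updateCol_succAbove]
    simp
  have h0 : (M.submatrix Fin.castSucc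
      (Fin.cons 0 fun t : Fin m => (i.succAbove t).castSucc.succ)).det =
      (-1) ^ (i : ℕ) * Matrix.cramer A (fun r => M r.castSucc 0) i := by
    rw [hlap, Matrix.det_succ_column_zero, Finset.mul_sum]
    refine Finset.sum_congr rfl fun r _ => ?_
    have : ((-1 : ℝ) ^ (i : ℕ)) * (-1) ^ (i : ℕ) = 1 := by
      rw [← mul_pow]; simp
    rw [pow_add]
    simp only [Matrix.submatrix_submatrix, Matrix.submatrix_apply, Fin.cons_zero, hA]
    have e : (Fin.cons 0 fun t : Fin m => (i.succAbove t).castSucc.succ :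
        Fin (m + 1) → Fin (m + 3)) ∘ Fin.succ =
        (fun t : Fin (m + 1) => t.castSucc.succ) ∘ i.succAbove := by
      ext t; simp
    rw [e]
    linear_combination (-(-1) ^ (r : ℕ) * M r.castSucc 0 * (M.submatrix
      (Fin.castSucc ∘ r.succAbove) ((fun t : Fin (m + 1) => t.castSucc.succ) ∘ i.succAbove)).det)
      * this
  have hl : (M.submatrix Fin.castSucc
      (Fin.snoc (fun t : Fin m => (i.succAbove t).castSucc.succ) (Fin.last _) :
        Fin (m + 1) → Fin (m + 3))).det =
      (-1) ^ (m + i : ℕ) * Matrix.cramer A (fun r => M r.castSucc (Fin.last _)) i := by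
    rw [hlap, Matrix.det_succ_column _ (Fin.last _), Finset.mul_sum]
    refine Finset.sum_congr rfl fun r _ => ?_
    have : ((-1 : ℝ) ^ (i : ℕ)) * (-1) ^ (i : ℕ) = 1 := by
      rw [← mul_pow]; simp
    rw [pow_add, pow_add, pow_add]
    simp only [Matrix.submatrix_submatrix, Matrix.submatrix_apply, Fin.snoc_last, hA,
      Fin.succAbove_last, Fin.val_last]
    have e : (Fin.snoc (fun t : Fin m => (i.succAbove t).castSucc.succ) (Fin.last _) :
        Fin (m + 1) → Fin (m + 3)) ∘ Fin.castSucc =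
        (fun t : Fin (m + 1) => t.castSucc.succ) ∘ i.succAbove := by
      ext t; simp
    rw [e]
    linear_combination (-(-1) ^ (r : ℕ) * (-1) ^ m * M r.castSucc (Fin.last _) * (M.submatrix
      (Fin.castSucc ∘ r.succAbove) ((fun t : Fin (m + 1) => t.castSucc.succ) ∘ i.succAbove)).det)
      * this
  simp only [hleft, map_add, map_smul, Pi.add_apply, Pi.smul_apply, smul_eq_mul] at hcr
  rw [h0, hl]
  have hi : ((-1 : ℝ) ^ (i : ℕ)) * (-1) ^ (i : ℕ) = 1 := by
    rw [← mul_pow]; simp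
  rw [pow_succ, pow_add] at hcr
  rw [pow_add]
  change A.det * D i.castSucc.succ = _
  linear_combination (-(-1) ^ (i : ℕ)) * hcr - A.det * D i.castSucc.succ * hi

/-- Fekete's criterion for upper triangular matrices: it suffices to know the positivity of the
nontrivial minors with consecutive columns. The induction is on the size of the minor and then on
the spread `d` of its columns; the three-term relation, with a column `p` missing from `g` as the
middle one, expresses the minor through minors that are smaller or less spread. -/
theorem fekete {n : ℕ} {B : Matrix (Fin n) (Fin n) ℝ} (hB : B.BlockTriangular id)
    (hcons : ∀ (k a : ℕ) (f g : Fin k → Fin n), StrictMono f → StrictMono g →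
      (∀ r, f r ≤ g r) → (∀ r, (g r : ℕ) = a + r) → 0 < fminor B f g) :
    ∀ (k : ℕ) (f g : Fin k → Fin n), StrictMono f → StrictMono g →
      (∀ r, f r ≤ g r) → 0 < fminor B f g := by
  intro k
  induction k with
  | zero => exact fun f g hf hg hfg => hcons 0 0 f g hf hg hfg fun r => r.elim0
  | succ k ihk =>
  obtain _ | m := k
  · refine fun f g hf hg hfg => hcons 1 (g 0) f g hf hg hfg fun r => ?_
    rw [Subsingleton.elim r 0]
    rfl
  have main : ∀ (d : ℕ) (f g : Fin (m + 2) → Fin n), (g (Fin.last _) : ℕ) - g 0 = d →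
      StrictMono f → StrictMono g → (∀ r, f r ≤ g r) → 0 < fminor B f g := by
    intro d
    induction d using Nat.strong_induction_on with
    | _ d ihd =>
    intro f g hd hf hg hfg
    by_cases hc : ∀ i : Fin (m + 1), (g i.succ : ℕ) = g i.castSucc + 1
    · refine hcons _ (g 0) f g hf hg hfg fun r => ?_
      induction r using Fin.induction with
      | zero => rfl
      | succ i ih => rw [hc, ih]; simp [add_assoc]
    push Not at hc
    obtain ⟨i, hi⟩ := hc
    have hlt : (g i.castSucc : ℕ) < g i.succ := hg Fin.castSucc_lt_succ
    -- `p` is the first column missing after `g i`; `h` enumerates the columns of `g` and `p`.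
    let p : Fin n := ⟨g i.castSucc + 1, by omega⟩
    let q : Fin (m + 3) := i.castSucc.succ
    let h : Fin (m + 3) → Fin n := q.insertNth p g
    have hh : StrictMono h := by
      refine (Fin.strictMono_insertNth_iff q p g).2 ⟨hg, fun j hj => ?_, fun j hj => ?_⟩
      · have : g j ≤ g i.castSucc := hg.monotone (by
          simp only [q, Fin.lt_def, Fin.le_def, Fin.val_succ, Fin.val_castSucc] at *; omega)
        simp only [p, Fin.lt_def, Fin.le_def] at *
        omega
      · have : g i.succ ≤ g j := hg.monotone (by
          simp only [q, Fin.le_def, Fin.val_succ, Fin.val_castSucc] at *; omega)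
        simp only [p, Fin.lt_def, Fin.le_def] at *
        omega
    have hq : ∀ j, h (q.succAbove j) = g j := fun j => by simp [h]
    have hsucc : ∀ j, g j ≤ h j.succ := fun j => by
      rw [← hq]
      exact hh.monotone (by
        simp only [Fin.succAbove, Fin.le_def]
        split_ifs <;> simp)
    have h0 : h 0 = g 0 := by
      rw [← hq]
      congr 1
    have hl : h (Fin.last _) = g (Fin.last _) := by
      rw [← hq]
      congr 1
      simp only [q, Fin.ext_iff, Fin.succAbove, Fin.lt_def]
      split_ifs with h
      · simp only [Fin.val_castSucc, Fin.val_succ, Fin.val_last] at h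
        omega
      · simp
    have key := three_term (B.submatrix f h) i
    simp only [Matrix.submatrix_submatrix] at key
    have e1 : h ∘ q.succAbove = g := funext hq
    rw [← Function.comp_assoc, ← Function.comp_assoc, e1, Function.comp_id] at key
    have p1 : 0 < fminor B (f ∘ Fin.castSucc) (h ∘ fun t : Fin (m + 1) => t.castSucc.succ) :=
      ihk _ _ (hf.comp Fin.strictMono_castSucc)
        (hh.comp (Fin.strictMono_succ.comp Fin.strictMono_castSucc))
        fun r => (hfg _).trans (hsucc _)
    have p2 : 0 < fminor B (f ∘ Fin.castSucc) (g ∘ Fin.castSucc) :=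
      ihk _ _ (hf.comp Fin.strictMono_castSucc) (hg.comp Fin.strictMono_castSucc)
        fun r => hfg _
    have p3 : 0 < fminor B f (h ∘ Fin.succ) := by
      refine ihd _ ?_ _ _ rfl hf (hh.comp Fin.strictMono_succ) fun r => (hfg _).trans (hsucc _)
      have a1 : h 0 < h (Fin.succ 0) := hh (Fin.succ_pos _)
      have a2 : g 0 < g (Fin.last _) := hg (Fin.last_pos)
      have a3 := congrArg Fin.val h0
      have a4 := congrArg Fin.val hl
      simp only [Function.comp_apply, Fin.succ_last, Nat.succ_eq_add_one, Fin.lt_def] at a1 a2 ⊢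
      rw [a4]
      omega
    have p4 : 0 < fminor B (f ∘ Fin.castSucc) (g ∘ Fin.succ) :=
      ihk _ _ (hf.comp Fin.strictMono_castSucc) (hg.comp Fin.strictMono_succ)
        fun r => (hfg _).trans (hg.monotone Fin.castSucc_lt_succ.le)
    -- Moving the last column down may break `f ≤ g`, but then the minor vanishes.
    have p5 : 0 ≤ fminor B f (h ∘ Fin.castSucc) := by
      by_cases hle : ∀ r, f r ≤ h (Fin.castSucc r)
      · refine (ihd _ ?_ _ _ rfl hf (hh.comp Fin.strictMono_castSucc) hle).le
        have a1 : h (Fin.castSucc (Fin.last _)) < h (Fin.last _) := hh (Fin.castSucc_lt_last _)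
        have a2 : g 0 < g (Fin.last _) := hg (Fin.last_pos)
        simp only [Function.comp_apply, Fin.castSucc_zero, Fin.lt_def] at *
        omega
      · exact (fminor_eq_zero hB hf (hh.comp Fin.strictMono_castSucc) hle).ge
    have : 0 < fminor B (f ∘ Fin.castSucc) (h ∘ fun t : Fin (m + 1) => t.castSucc.succ) *
        fminor B f g := by
      refine lt_of_lt_of_eq ?_ key.symm
      exact add_pos_of_pos_of_nonneg (mul_pos p2 p3) (mul_nonneg p4.le p5)
    exact (mul_pos_iff_of_pos_left p1).1 this
  exact fun f g => main _ f g rfl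

/-! ### Flag minors and the matrix entries -/

/-- Adjoining a row and a column with the same index `b`, to the right of all columns present,
multiplies a minor of an upper triangular matrix by `B b b`. -/
theorem fminor_snoc {n k : ℕ} {B : Matrix (Fin n) (Fin n) ℝ} (hB : B.BlockTriangular id)
    (f g : Fin k → Fin n) (b : Fin n) (hg : ∀ r, g r < b) :
    fminor B (Fin.snoc f b : Fin (k + 1) → Fin n) (Fin.snoc g b : Fin (k + 1) → Fin n) =
      fminor B f g * B b b := by
  have ef : (Fin.snoc f b : Fin (k + 1) → Fin n) ∘ Fin.castSucc = f := by ext t; simp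
  have eg : (Fin.snoc g b : Fin (k + 1) → Fin n) ∘ Fin.castSucc = g := by ext t; simp
  rw [fminor, Matrix.det_succ_row _ (Fin.last _), Fin.sum_univ_castSucc, Finset.sum_eq_zero]
  · simp only [Matrix.submatrix_submatrix, Fin.succAbove_last, ef, eg]
    simp [mul_comm]
  · intro t _
    have : B b (g t) = 0 := hB (hg t)
    simp [this]

/-- Adjoining a first row `i` and a first column `j`, where `j` is smaller than all other row
indices, multiplies a minor of an upper triangular matrix by `B i j`: the column `j` vanishes on
the other rows. -/
theorem fminor_cons {n k : ℕ} {B : Matrix (Fin n) (Fin n) ℝ} (hB : B.BlockTriangular id)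
    (f g : Fin k → Fin n) (i j : Fin n) (hf : ∀ r, j < f r) :
    fminor B (Fin.cons i f : Fin (k + 1) → Fin n) (Fin.cons j g : Fin (k + 1) → Fin n) =
      B i j * fminor B f g := by
  have ef : (Fin.cons i f : Fin (k + 1) → Fin n) ∘ Fin.succ = f := by ext t; simp
  have eg : (Fin.cons j g : Fin (k + 1) → Fin n) ∘ Fin.succ = g := by ext t; simp
  rw [fminor, Matrix.det_succ_column_zero, Fin.sum_univ_succ, Finset.sum_eq_zero]
  · simp only [Matrix.submatrix_submatrix, Fin.succAbove_zero, ef, eg]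
    simp
  · intro t _
    have : B (f t) j = 0 := hB (hf t)
    simp [this]

theorem lt_lastEnum {n : ℕ} (j : Fin n) (hk : n - 1 - j ≤ n) (r : Fin (n - 1 - j)) :
    j < lastEnum hk r := by
  simp only [Fin.lt_def, lastEnum]
  omega

theorem cons_lastEnum {n : ℕ} (j : Fin n) (hk : n - 1 - j ≤ n) (hk' : n - 1 - j + 1 ≤ n) :
    (Fin.cons j (lastEnum hk) : Fin (n - 1 - j + 1) → Fin n) = lastEnum hk' := by
  ext r
  refine Fin.cases ?_ (fun r => ?_) r
  · simp only [Fin.cons_zero, lastEnum, Fin.val_zero]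
    omega
  · simp only [Fin.cons_succ, lastEnum, Fin.val_succ]
    omega

/-- For `i ≤ j`, the flag minor on the rows `i, j + 1, …, n` and the columns `j, …, n` is the
product of the entry `(i, j)` and a principal flag minor. -/
theorem fminor_cons_lastEnum {n : ℕ} {B : Matrix (Fin n) (Fin n) ℝ} (hB : B.BlockTriangular id)
    (i j : Fin n) (hk : n - 1 - j ≤ n) (hk' : n - 1 - j + 1 ≤ n) :
    fminor B (Fin.cons i (lastEnum hk) : Fin (n - 1 - j + 1) → Fin n) (lastEnum hk') =
      B i j * fminor B (lastEnum hk) (lastEnum hk) := by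
  rw [← cons_lastEnum j hk hk']
  exact fminor_cons hB _ _ i j (lt_lastEnum j hk)

theorem cons_lastEnum_strictMono {n : ℕ} {i j : Fin n} (hij : i ≤ j) (hk : n - 1 - j ≤ n) :
    StrictMono (Fin.cons i (lastEnum hk) : Fin (n - 1 - j + 1) → Fin n) :=
  Fin.strictMono_cons.2 ⟨fun r => hij.trans_lt (lt_lastEnum j hk r), lastEnum_strictMono hk⟩

/-- All right flag minors `Δ_I(B)` are positive; `I` is given by its increasing enumeration `f`. -/
def FlagPos {n : ℕ} (B : Matrix (Fin n) (Fin n) ℝ) : Prop :=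
  ∀ (k : ℕ) (hk : k ≤ n) (f : Fin k → Fin n), StrictMono f → 0 < fminor B f (lastEnum hk)

theorem Bpos.flagPos {n : ℕ} {B : Matrix (Fin n) (Fin n) ℝ} (hB : Bpos n B) : FlagPos B :=
  fun _ hk f hf => ((Bpos_iff B).1 hB).2 _ f _ hf (lastEnum_strictMono hk) (le_lastEnum hf)

theorem FlagPos.diag_pos {n : ℕ} {B : Matrix (Fin n) (Fin n) ℝ} (h : FlagPos B)
    (hB : B.BlockTriangular id) (j : Fin n) : 0 < B j j := by
  have hk : n - 1 - j ≤ n := by omega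
  have hk' : n - 1 - j + 1 ≤ n := by omega
  have h1 := h _ hk' _ (cons_lastEnum_strictMono le_rfl hk)
  rw [fminor_cons_lastEnum hB j j hk hk'] at h1
  exact (mul_pos_iff_of_pos_right (h _ hk _ (lastEnum_strictMono hk))).1 h1

/-- A nontrivial minor with consecutive columns becomes a flag minor once the missing last rows
and columns are adjoined, which multiplies it by diagonal entries. -/
theorem FlagPos.consecutive_pos {n : ℕ} {B : Matrix (Fin n) (Fin n) ℝ} (h : FlagPos B)
    (hB : B.BlockTriangular id) (d : ℕ) : ∀ (k a : ℕ) (f g : Fin k → Fin n), StrictMono f →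
      StrictMono g → (∀ r, f r ≤ g r) → (∀ r, (g r : ℕ) = a + r) → a + k + d = n →
      0 < fminor B f g := by
  induction d with
  | zero =>
    intro k a f g hf hg hfg ha hn
    have : g = lastEnum (le_of_strictMono hf) := by
      ext r
      rw [ha]
      simp only [lastEnum]
      omega
    rw [this]
    exact h _ _ f hf
  | succ d ih =>
    intro k a f g hf hg hfg ha hn
    let b : Fin n := ⟨a + k, by omega⟩
    have hgb : ∀ r, g r < b := fun r => by
      simp only [Fin.lt_def, b, ha]
      omega
    have hmono : ∀ u : Fin k → Fin n, StrictMono u → (∀ r, u r < b) →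
        StrictMono (Fin.snoc u b : Fin (k + 1) → Fin n) := by
      intro u hu hub
      rw [← Fin.insertNth_last', Fin.strictMono_insertNth_iff]
      exact ⟨hu, fun r _ => hub r, fun r hr => absurd (Fin.castSucc_lt_last r) (not_lt.2 hr)⟩
    have h1 := ih (k + 1) a (Fin.snoc f b) (Fin.snoc g b)
      (hmono f hf fun r => (hfg r).trans_lt (hgb r)) (hmono g hg hgb)
      (fun r => by
        refine Fin.lastCases ?_ (fun r => ?_) r
        · simp
        · simpa using hfg r)
      (fun r => by
        refine Fin.lastCases ?_ (fun r => ?_) r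
        · simp [b]
        · simpa using ha r) (by omega)
    rw [fminor_snoc hB f g b hgb] at h1
    exact (mul_pos_iff_of_pos_right (h.diag_pos hB b)).1 h1

/-- An upper triangular matrix with positive flag minors is totally positive. -/
theorem FlagPos.bpos {n : ℕ} {B : Matrix (Fin n) (Fin n) ℝ} (h : FlagPos B)
    (hB : B.BlockTriangular id) : Bpos n B := by
  refine (Bpos_iff B).2 ⟨⟨hB, ?_⟩, fekete hB ?_⟩
  · rw [Matrix.det_of_isUpperTriangular hB]
    exact (Finset.prod_pos fun j _ => h.diag_pos hB j).ne'.isUnit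
  · intro k a f g hf hg hfg ha
    obtain _ | k := k
    · simp [fminor]
    · have := ha (Fin.last k)
      rw [Fin.val_last] at this
      exact h.consecutive_pos hB (n - a - (k + 1)) _ a f g hf hg hfg ha (by omega)

/-- An upper triangular matrix with positive flag minors is determined by them. -/
theorem FlagPos.ext {n : ℕ} {B C : Matrix (Fin n) (Fin n) ℝ} (h : FlagPos B)
    (hB : B.BlockTriangular id) (hC : C.BlockTriangular id)
    (heq : ∀ (k : ℕ) (hk : k ≤ n) (f : Fin k → Fin n), StrictMono f →
      fminor C f (lastEnum hk) = fminor B f (lastEnum hk)) : C = B := by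
  ext i j
  obtain hji | hij := lt_or_ge j i
  · rw [hB hji, hC hji]
  have hk : n - 1 - j ≤ n := by omega
  have hk' : n - 1 - j + 1 ≤ n := by omega
  have h1 := heq _ hk' _ (cons_lastEnum_strictMono hij hk)
  rw [fminor_cons_lastEnum hB i j hk hk', fminor_cons_lastEnum hC i j hk hk',
    heq _ hk _ (lastEnum_strictMono hk)] at h1
  exact mul_right_cancel₀ (h _ hk _ (lastEnum_strictMono hk)).ne' h1

/-! ### Reversing the rows -/

theorem sign_revPerm (k : ℕ) :
    ((Equiv.Perm.sign (Fin.revPerm : Equiv.Perm (Fin k)) : ℤ) : ℝ) =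
      ∏ t : Fin k, (-1 : ℝ) ^ (k - 1 - t : ℕ) := by
  rw [Equiv.Perm.sign_eq_prod_prod_Ioi]
  push_cast
  refine Finset.prod_congr rfl fun t _ => ?_
  rw [← Fin.card_Ioi, ← Finset.prod_const]
  refine Finset.prod_congr rfl fun s hs => ?_
  rw [Finset.mem_Ioi] at hs
  simp [hs.not_gt]

theorem fminor_rev_rows {n k : ℕ} (G : Matrix (Fin n) (Fin n) ℝ) (f g : Fin k → Fin n) :
    fminor (G.submatrix Fin.rev id) f g =
      (∏ t : Fin k, (-1 : ℝ) ^ (k - 1 - t : ℕ)) * fminor G (barEnum f) g := by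
  rw [← sign_revPerm, ← Matrix.det_permute]
  refine congrArg Matrix.det ?_
  ext r s
  simp [barEnum]

/-- The flag of `G` with its rows reversed has an upper triangular representative: reversing the
rows of `G` and multiplying by a suitable lower triangular matrix, with diagonal signs chosen to
absorb the sign of the reversal. -/
theorem exists_reversed {n : ℕ} (G : Matrix (Fin n) (Fin n) ℝ) (hG : FlagPos G) :
    ∃ B : Matrix (Fin n) (Fin n) ℝ, B.BlockTriangular id ∧
      ∀ (k : ℕ) (hk : k ≤ n) (f : Fin k → Fin n),
        fminor B f (lastEnum hk) = fminor G (barEnum f) (lastEnum hk) := by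
  classical
  set K := G.submatrix Fin.rev id with hK
  -- The coefficients clearing the entries of column `j` below the diagonal.
  have hc : ∀ j : Fin n, ∃ c : {l // j < l} → ℝ,
      (K.submatrix Subtype.val Subtype.val) *ᵥ c =
        fun i : {l // j < l} => -((-1) ^ (n - 1 - j : ℕ) * K i j) := by
    intro j
    have hk : n - 1 - j ≤ n := by omega
    have hbij : Function.Bijective
        (fun r => ⟨lastEnum hk r, lt_lastEnum j hk r⟩ : Fin (n - 1 - j) → {l // j < l}) := by
      refine ⟨fun r s hrs => (lastEnum_strictMono hk).injective (congrArg Subtype.val hrs), ?_⟩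
      rintro ⟨l, hl⟩
      have hl' : (j : ℕ) < l := hl
      refine ⟨⟨l - (j + 1), by omega⟩, Subtype.ext (Fin.ext ?_)⟩
      simp only [lastEnum]
      omega
    have hdet : (K.submatrix (Subtype.val : {l // j < l} → Fin n) Subtype.val).det ≠ 0 := by
      rw [← Matrix.det_submatrix_equiv_self (Equiv.ofBijective _ hbij)]
      change fminor K (lastEnum hk) (lastEnum hk) ≠ 0
      rw [fminor_rev_rows]
      refine mul_ne_zero (Finset.prod_ne_zero_iff.2 fun t _ => by simp) (hG _ hk _ ?_).ne'
      exact barEnum_strictMono (lastEnum_strictMono hk)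
    refine ⟨(K.submatrix (Subtype.val : {l // j < l} → Fin n)
      (Subtype.val : {l // j < l} → Fin n))⁻¹ *ᵥ
        (fun i : {l // j < l} => -((-1) ^ (n - 1 - j : ℕ) * K i j)), ?_⟩
    rw [Matrix.mulVec_mulVec, Matrix.mul_nonsing_inv _ hdet.isUnit, Matrix.one_mulVec]
  choose c hc using hc
  let T : Matrix (Fin n) (Fin n) ℝ := Matrix.of fun l j =>
    if h : j < l then c j ⟨l, h⟩ else if l = j then (-1) ^ (n - 1 - j : ℕ) else 0
  have hT : ∀ l j, l < j → T l j = 0 := fun l j h => by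
    simp [T, h.le, h.ne]
  have hTd : ∀ j, T j j = (-1) ^ (n - 1 - j : ℕ) := fun j => by simp [T]
  refine ⟨K * T, ?_, fun k hk f => ?_⟩
  · intro i j hij
    have hij : j < i := hij
    -- Row `i` of the linear system defining `c j`.
    have h1 := congrFun (hc j) ⟨i, hij⟩
    simp only [Matrix.mulVec, dotProduct, Matrix.submatrix_apply] at h1
    rw [Matrix.mul_apply, ← Finset.sum_filter_add_sum_filter_not _ (fun l => j < l),
      Finset.sum_subtype (p := fun l => j < l) _ (by simp)]
    have h2 : ∑ l : {l // j < l}, K i l * T l j = ∑ l : {l // j < l}, K i l * c j l :=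
      Finset.sum_congr rfl fun l _ => by simp [T, l.2]
    rw [h2, h1, Finset.sum_eq_single j, hTd]
    · ring
    · intro l hl hlj
      simp only [Finset.mem_filter, Finset.mem_univ, true_and, not_lt] at hl
      rw [hT l j (lt_of_le_of_ne hl hlj), mul_zero]
    · simp
  · have hmul : (K * T).submatrix f (lastEnum hk) =
        K.submatrix f (lastEnum hk) * T.submatrix (lastEnum hk) (lastEnum hk) := by
      ext r s
      simp only [Matrix.mul_apply, Matrix.submatrix_apply]
      rw [← Finset.sum_image (f := fun l => K (f r) l * T l (lastEnum hk s)) (g := lastEnum hk)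
        (lastEnum_strictMono hk).injective.injOn]
      refine (Finset.sum_subset (Finset.subset_univ _) fun l _ hl => ?_).symm
      rw [hT, mul_zero]
      rw [← lastCols_eq hk] at hl
      simp only [lastCols, Finset.mem_filter, Finset.mem_univ, true_and, not_le] at hl
      simp only [Fin.lt_def, lastEnum]
      omega
    have hTdet : (T.submatrix (lastEnum hk) (lastEnum hk)).det =
        ∏ t : Fin k, (-1 : ℝ) ^ (k - 1 - t : ℕ) := by
      rw [Matrix.det_of_isLowerTriangular]
      · refine Finset.prod_congr rfl fun t _ => ?_
        rw [Matrix.submatrix_apply, hTd]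
        congr 1
        simp only [lastEnum]
        omega
      · intro r s hrs
        exact hT _ _ (lastEnum_strictMono hk hrs)
    have hsq : (∏ t : Fin k, (-1 : ℝ) ^ (k - 1 - t : ℕ)) *
        (∏ t : Fin k, (-1 : ℝ) ^ (k - 1 - t : ℕ)) = 1 := by
      rw [← Finset.prod_mul_distrib]
      refine Finset.prod_eq_one fun t _ => ?_
      rw [← mul_pow]
      simp
    have hrev := fminor_rev_rows G f (lastEnum hk)
    rw [fminor, hmul, Matrix.det_mul, hTdet]
    rw [← hK, fminor] at hrev
    rw [hrev]
    linear_combination fminor G (barEnum f) (lastEnum hk) * hsq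

theorem flagR_eq_iff {n : ℕ} (C G : Matrix (Fin n) (Fin n) ℝ) :
    (∀ I, flagR C I = flagR G (barSet I)) ↔
      ∀ (k : ℕ) (hk : k ≤ n) (f : Fin k → Fin n), StrictMono f →
        fminor C f (lastEnum hk) = fminor G (barEnum f) (lastEnum hk) := by
  constructor
  · intro h k hk f hf
    have := h (Finset.univ.image f)
    rwa [barSet_image, flagR_eq C hf, flagR_eq G (barEnum_strictMono hf)] at this
  · intro h I
    obtain ⟨f, hf, hI⟩ := exists_enum I rfl
    rw [hI, barSet_image, flagR_eq C hf, flagR_eq G (barEnum_strictMono hf)]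
    exact h _ _ f hf

theorem existsUnique_flagR {n : ℕ} (G : Matrix (Fin n) (Fin n) ℝ) (hG : Bpos n G) :
    ∃! C : Matrix (Fin n) (Fin n) ℝ, Bpos n C ∧ ∀ I, flagR C I = flagR G (barSet I) := by
  obtain ⟨B, hB, hflag⟩ := exists_reversed G hG.flagPos
  have hpos : FlagPos B := fun k hk f hf => by
    rw [hflag]
    exact hG.flagPos k hk _ (barEnum_strictMono hf)
  refine ⟨B, ⟨hpos.bpos hB, (flagR_eq_iff B G).2 fun k hk f _ => hflag k hk f⟩, ?_⟩
  rintro C ⟨hC, hCG⟩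
  refine hpos.ext hB hC.1.1 fun k hk f hf => ?_
  rw [(flagR_eq_iff C G).1 hCG k hk f hf, hflag]

/-! ### Upper flag minors by antidiagonal transposition -/

/-- The transpose of `M` in its antidiagonal. -/
def antiT {n : ℕ} (M : Matrix (Fin n) (Fin n) ℝ) : Matrix (Fin n) (Fin n) ℝ :=
  Mᵀ.submatrix Fin.rev Fin.rev

theorem antiT_antiT {n : ℕ} (M : Matrix (Fin n) (Fin n) ℝ) : antiT (antiT M) = M := by
  ext i j
  simp [antiT]

/-- Both enumerations are reversed, so the two reversals contribute the same sign. -/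
theorem fminor_antiT {n k : ℕ} (M : Matrix (Fin n) (Fin n) ℝ) (f g : Fin k → Fin n) :
    fminor (antiT M) (barEnum f) (barEnum g) = fminor M g f := by
  rw [fminor, fminor, ← Matrix.det_transpose,
    ← Matrix.det_submatrix_equiv_self Fin.revPerm (M.submatrix g f)]
  congr 1
  ext r s
  simp [antiT, barEnum]

theorem barEnum_barEnum {n k : ℕ} (f : Fin k → Fin n) : barEnum (barEnum f) = f := by
  ext r
  simp [barEnum]

theorem Bpos.antiT {n : ℕ} {M : Matrix (Fin n) (Fin n) ℝ} (hM : Bpos n M) : Bpos n (antiT M) := by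
  rw [Bpos_iff] at hM ⊢
  obtain ⟨⟨hT, hdet⟩, h⟩ := hM
  refine ⟨⟨fun i j hij => hT (Fin.rev_lt_rev.2 hij), ?_⟩, fun k f g hf hg hfg => ?_⟩
  · have : (_root_.antiT M).det = M.det := by
      rw [← Matrix.det_transpose M]
      exact Matrix.det_submatrix_equiv_self Fin.revPerm Mᵀ
    rwa [this]
  · rw [← barEnum_barEnum f, ← barEnum_barEnum g, fminor_antiT]
    exact h _ _ _ (barEnum_strictMono hg) (barEnum_strictMono hf)
      fun r => Fin.rev_le_rev.2 (hfg _)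

theorem flagU_eq_flagR_antiT {n : ℕ} (M : Matrix (Fin n) (Fin n) ℝ) (J : Finset (Fin n)) :
    flagU M J = flagR (antiT M) (barSet J) := by
  obtain ⟨g, hg, hJ⟩ := exists_enum J rfl
  have hk := le_of_strictMono hg
  have hL := lastEnum_strictMono hk
  rw [hJ, barSet_image, flagR_eq _ (barEnum_strictMono hg), ← barEnum_barEnum (lastEnum _),
    fminor_antiT, ← hJ]
  refine gminor_eq_fminor M (barEnum_strictMono hL) hg ?_ hJ
  ext x
  simp only [firstRows, Finset.mem_filter, Finset.mem_univ, true_and, Finset.mem_image, barEnum]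
  constructor
  · intro hx
    exact ⟨⟨x, hx⟩, by ext; simp only [lastEnum, Fin.val_rev]; omega⟩
  · rintro ⟨r, rfl⟩
    simp only [lastEnum, Fin.val_rev]
    omega

theorem existsUnique_flagU {n : ℕ} (G : Matrix (Fin n) (Fin n) ℝ) (hG : Bpos n G) :
    ∃! C : Matrix (Fin n) (Fin n) ℝ, Bpos n C ∧ ∀ J, flagU C J = flagU G (barSet J) := by
  obtain ⟨B, ⟨hB, hflag⟩, huniq⟩ := existsUnique_flagR (antiT G) hG.antiT
  refine ⟨antiT B, ⟨hB.antiT, fun J => ?_⟩, ?_⟩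
  · rw [flagU_eq_flagR_antiT, flagU_eq_flagR_antiT, antiT_antiT, hflag]
  · rintro C ⟨hC, hCG⟩
    rw [← huniq (antiT C) ⟨hC.antiT, fun I => ?_⟩, antiT_antiT]
    have := hCG (barSet I)
    rwa [flagU_eq_flagR_antiT, flagU_eq_flagR_antiT, barSet_barSet] at this

/-- For every `G ∈ B_n^+` there exist unique `Ǧ, Ĝ ∈ B_n^+` with
`Δ_I(Ǧ) = Δ_{Ī}(G)` and `Δ^J(Ĝ) = Δ^{J̄}(G)` for all `I, J`. -/
theorem stmt_2 (n : ℕ) (hn : 2 ≤ n) (G : Matrix (Fin n) (Fin n) ℝ) (hG : Bpos n G) :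
    (∃! Gc : Matrix (Fin n) (Fin n) ℝ,
        Bpos n Gc ∧ ∀ I : Finset (Fin n), flagR Gc I = flagR G (barSet I)) ∧
    (∃! Gh : Matrix (Fin n) (Fin n) ℝ,
        Bpos n Gh ∧ ∀ J : Finset (Fin n), flagU Gh J = flagU G (barSet J)) := by
  exact ⟨existsUnique_flagR G hG, existsUnique_flagU G hG⟩

end
end
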